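/- Let f ∈ C(𝕋) and h > 0. Then (2/3)·K₂(f, h/(2√6)) ≤ W₂*(f, χ_h²) ≤ 2·K₂(f, h/(2√6)). -/

import Mathlib

/-!
Write `T_u f = f * χ_u²`, that is
`T_u f (t) = u⁻² ∫_0^u (u - x) (f (t + x) + f (t - x)) dx` (`conv_chiPow_two`). If `G'' = F`, then
integration by parts gives `u² T_u F (t) = G (t + u) - 2 G (t) + G (t - u)` (`sq_mul_conv`).

*Upper bound.* For a `C²` function `g`, the second difference with step `x` is bounded by
`x² ‖g''‖`, and `u⁻² ∫_0^u (u - x) x² dx = u² / 12`, so `‖g - T_u g‖ ≤ (u² / 12) ‖g''‖`.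
Since `T_u` averages, `‖(f - g) - T_u (f - g)‖ ≤ 2 ‖f - g‖`. Adding up and using
`2 (h / (2 √6))² = h² / 12` gives the claim.

*Lower bound.* The probability density `12 h⁻⁴ (h - x) x²` on `[0, h]` gives the mean
`g = 12 h⁻⁴ ∫_0^h (h - x) x² T_x f dx`, for which `‖f - g‖ ≤ W₂*(f, χ_h²)` is immediate. If
`F'' = f`, then `x² T_x f` is the second difference of `F` with step `x`, so that
`g = 12 h⁻² (T_h F - F)` and therefore `g'' = 12 h⁻² (T_h f - f)`. Hence
`K₂(f, h / (2 √6)) ≤ W₂* + (h² / 24) (12 h⁻²) W₂* = (3 / 2) W₂*` (`exists_smooth_approx`).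
-/

open MeasureTheory Real

/-- Uniform (sup) norm of a real function. -/
noncomputable def unorm (f : ℝ → ℝ) : ℝ := ⨆ u : ℝ, |f u|

/-- Convolution of two real functions. -/
noncomputable def conv (f g : ℝ → ℝ) : ℝ → ℝ := fun t => ∫ u : ℝ, f u * g (t - u)

/-- Normalized characteristic function of `(-h/2, h/2)`. -/
noncomputable def chi (h : ℝ) : ℝ → ℝ := fun t => if -h/2 < t ∧ t < h/2 then 1/h else 0

/-- Convolution powers `χ_h^k` (defined for `k ≥ 1`; junk value `0` at `k = 0`). -/
noncomputable def chiPow (h : ℝ) : ℕ → (ℝ → ℝ)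
  | 0 => fun _ => 0
  | 1 => chi h
  | (k+2) => conv (chiPow h (k+1)) (chi h)

/-- Special modulus of continuity `W₂(f, χ_h^k) = ‖f - f*χ_h^k‖`. -/
noncomputable def W2 (f : ℝ → ℝ) (h : ℝ) (k : ℕ) : ℝ :=
  unorm (fun t => f t - conv f (chiPow h k) t)

/-- `W₂*(f, χ_h^k) = sup_{0 < u ≤ h} W₂(f, χ_u^k)`. -/
noncomputable def W2star (f : ℝ → ℝ) (h : ℝ) (k : ℕ) : ℝ :=
  ⨆ u : Set.Ioc (0:ℝ) h, W2 f u.1 k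

/-- Second Peetre K-functional: infimum over twice continuously differentiable
1-periodic functions `g` of `‖f - g‖ + h² ‖D²g‖`. -/
noncomputable def K2 (f : ℝ → ℝ) (h : ℝ) : ℝ :=
  ⨅ g : {g : ℝ → ℝ // ContDiff ℝ 2 g ∧ Function.Periodic g 1},
    unorm (fun t => f t - g.1 t) + h^2 * unorm (iteratedDeriv 2 g.1)

/-- Generalized K-functional `K̃₂(f, h₁, h₂)`. -/
noncomputable def Ktilde2 (f : ℝ → ℝ) (h1 h2 : ℝ) : ℝ :=
  ⨅ p : {p : (ℝ → ℝ) × (ℝ → ℝ) //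
      (ContDiff ℝ 1 p.1 ∧ Function.Periodic p.1 1) ∧
      (ContDiff ℝ 2 p.2 ∧ Function.Periodic p.2 1)},
    unorm (fun t => f t - p.1.1 t) + h1 * unorm (deriv (fun t => p.1.1 t - p.1.2 t))
      + h2^2 * unorm (iteratedDeriv 2 p.1.2)

/-- Classical second modulus of smoothness. -/
noncomputable def omega2 (f : ℝ → ℝ) (h : ℝ) : ℝ :=
  ⨆ u : Set.Ioc (0:ℝ) h, ⨆ t : ℝ, |f (t + u.1) - 2 * f t + f (t - u.1)|

/-- `τ` is a real 1-periodic trigonometric polynomial of degree at most `n - 1`. -/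
def IsTrigPolyDegLT (n : ℕ) (τ : ℝ → ℝ) : Prop :=
  ∃ a b : ℕ → ℝ, ∀ t : ℝ, τ t =
    ∑ j ∈ Finset.range n, (a j * Real.cos (2 * Real.pi * j * t) + b j * Real.sin (2 * Real.pi * j * t))

/-- Best approximation `E_{n-1}(f)` by trigonometric polynomials of degree at most `n-1`. -/
noncomputable def bestApprox (n : ℕ) (f : ℝ → ℝ) : ℝ :=
  ⨅ τ : {τ : ℝ → ℝ // IsTrigPolyDegLT n τ}, unorm (fun t => f t - τ.1 t)

/-! ### The averaging operator `F ↦ F * χ_u²` -/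

lemma chiPow_two {u : ℝ} (hu : 0 < u) (x : ℝ) :
    chiPow u 2 x = max (u - |x|) 0 / u ^ 2 := by
  have key : ∀ y, chi u y * chi u (x - y) =
      (Set.Ioo (max (-u / 2) (x - u / 2)) (min (u / 2) (x + u / 2))).indicator
        (fun _ => 1 / u ^ 2) y := by
    intro y
    by_cases hy : y ∈ Set.Ioo (max (-u / 2) (x - u / 2)) (min (u / 2) (x + u / 2))
    · rw [Set.indicator_of_mem hy]
      obtain ⟨h1, h2⟩ := hy
      rw [max_lt_iff] at h1
      rw [lt_min_iff] at h2
      unfold chi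
      rw [if_pos ⟨h1.1, h2.1⟩, if_pos ⟨by linarith, by linarith⟩]
      field_simp
    · rw [Set.indicator_of_notMem hy]
      unfold chi
      by_cases h1 : -u / 2 < y ∧ y < u / 2
      · rw [if_neg (c := -u / 2 < x - y ∧ x - y < u / 2), mul_zero]
        rintro ⟨h3, h4⟩
        exact hy ⟨max_lt h1.1 (by linarith), lt_min h1.2 (by linarith)⟩
      · rw [if_neg h1, zero_mul]
  change ∫ y, chi u y * chi u (x - y) = _
  simp_rw [key]
  rw [integral_indicator measurableSet_Ioo, setIntegral_const, Real.volume_real_Ioo, smul_eq_mul,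
    mul_one_div]
  congr 2
  rcases le_total 0 x with hx | hx
  · rw [abs_of_nonneg hx, max_eq_right (by linarith), min_eq_left (by linarith)]; ring
  · rw [abs_of_nonpos hx, max_eq_left (by linarith), min_eq_right (by linarith)]; ring

/-- The explicit form of the averaging operator `F ↦ F * χ_u²`. -/
lemma conv_chiPow_two {u : ℝ} (hu : 0 < u) {F : ℝ → ℝ} (hF : Continuous F) (t : ℝ) :
    conv F (chiPow u 2) t = (∫ x in (0:ℝ)..u, (u - x) * (F (t + x) + F (t - x))) / u ^ 2 := by
  have e1 : conv F (chiPow u 2) t = ∫ x : ℝ, F (t - x) * (max (u - |x|) 0 / u ^ 2) := by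
    unfold conv
    simp_rw [chiPow_two hu]
    rw [← integral_sub_left_eq_self (fun y => F y * (max (u - |t - y|) 0 / u ^ 2)) volume t]
    simp
  have hc : Continuous fun x : ℝ => F (t - x) * (max (u - |x|) 0 / u ^ 2) := by fun_prop
  have e2 : ∫ x : ℝ, F (t - x) * (max (u - |x|) 0 / u ^ 2) =
      ∫ x in (-u)..u, F (t - x) * (max (u - |x|) 0 / u ^ 2) := by
    rw [intervalIntegral.integral_of_le (by linarith)]
    symm
    apply MeasureTheory.setIntegral_eq_integral_of_forall_compl_eq_zero
    intro x hx
    have : u ≤ |x| := by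
      by_contra! hlt
      rw [abs_lt] at hlt
      exact hx ⟨hlt.1, hlt.2.le⟩
    rw [max_eq_right (by linarith)]
    simp
  have e3 : ∫ x in (-u)..0, F (t - x) * (max (u - |x|) 0 / u ^ 2) =
      ∫ x in (0:ℝ)..u, F (t + x) * (max (u - |x|) 0 / u ^ 2) := by
    have := intervalIntegral.integral_comp_neg (a := 0) (b := u)
      (fun x => F (t - x) * (max (u - |x|) 0 / u ^ 2))
    simp only [neg_zero, abs_neg, sub_neg_eq_add] at this
    exact this.symm
  have hc' : Continuous fun x : ℝ => F (t + x) * (max (u - |x|) 0 / u ^ 2) := by fun_prop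
  rw [e1, e2, ← intervalIntegral.integral_add_adjacent_intervals (b := 0)
    (hc.intervalIntegrable _ _) (hc.intervalIntegrable _ _), e3,
    ← intervalIntegral.integral_add (hc'.intervalIntegrable _ _) (hc.intervalIntegrable _ _),
    ← intervalIntegral.integral_div]
  apply intervalIntegral.integral_congr
  intro x hx
  rw [Set.uIcc_of_le hu.le] at hx
  simp only
  rw [abs_of_nonneg hx.1, max_eq_left (by linarith [hx.2])]
  ring

lemma integral_second_diff {F G1 G : ℝ → ℝ} (hF : Continuous F)
    (hG1 : ∀ x, HasDerivAt G1 (F x) x) (hG : ∀ x, HasDerivAt G (G1 x) x) (u t : ℝ) :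
    ∫ x in (0:ℝ)..u, (u - x) * (F (t + x) + F (t - x)) = G (t + u) - 2 * G t + G (t - u) := by
  -- An antiderivative of the integrand, found by integrating by parts.
  have hd : ∀ x, HasDerivAt
      (fun x => (u - x) * (G1 (t + x) - G1 (t - x)) + (G (t + x) + G (t - x)))
      ((u - x) * (F (t + x) + F (t - x))) x := by
    intro x
    have p1 := (hG1 (t + x)).comp_const_add t x
    have p2 := (hG1 (t - x)).comp_const_sub t x
    have p3 := (hG (t + x)).comp_const_add t x
    have p4 := (hG (t - x)).comp_const_sub t x
    have p5 := (hasDerivAt_id' x).const_sub u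
    refine ((p5.mul (p1.sub p2)).add (p3.add p4)).congr_deriv ?_
    simp only [Pi.sub_apply]
    ring
  have hc : Continuous fun x : ℝ => (u - x) * (F (t + x) + F (t - x)) := by fun_prop
  rw [intervalIntegral.integral_eq_sub_of_hasDerivAt (fun x _ => hd x) (hc.intervalIntegrable _ _)]
  simp only [sub_self, add_zero, sub_zero, zero_mul]
  ring

lemma sq_mul_conv {F G1 G : ℝ → ℝ} (hF : Continuous F)
    (hG1 : ∀ x, HasDerivAt G1 (F x) x) (hG : ∀ x, HasDerivAt G (G1 x) x) {u : ℝ} (hu : 0 < u)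
    (t : ℝ) : u ^ 2 * conv F (chiPow u 2) t = G (t + u) - 2 * G t + G (t - u) := by
  rw [conv_chiPow_two hu hF, integral_second_diff hF hG1 hG]
  field_simp

lemma exists_second_antideriv {F : ℝ → ℝ} (hF : Continuous F) :
    ∃ G1 G : ℝ → ℝ, (∀ x, HasDerivAt G1 (F x) x) ∧ (∀ x, HasDerivAt G (G1 x) x) ∧
      Continuous G := by
  have h1 : ∀ {F : ℝ → ℝ}, Continuous F → ∀ x, HasDerivAt (fun x => ∫ y in (0:ℝ)..x, F y) (F x) x :=
    fun hF x => intervalIntegral.integral_hasDerivAt_right (hF.intervalIntegrable _ _)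
      (hF.stronglyMeasurableAtFilter _ _) hF.continuousAt
  have c1 : Continuous (fun x => ∫ y in (0:ℝ)..x, F y) :=
    continuous_iff_continuousAt.2 fun x => (h1 hF x).continuousAt
  exact ⟨_, _, h1 hF, h1 c1, continuous_iff_continuousAt.2 fun x => (h1 c1 x).continuousAt⟩

lemma integral_sub_id (u : ℝ) : ∫ x in (0:ℝ)..u, (u - x) = u ^ 2 / 2 := by
  rw [intervalIntegral.integral_sub (by simp) (by simp)]
  simp
  ring

lemma integral_sub_mul_sq (u : ℝ) : ∫ x in (0:ℝ)..u, (u - x) * x ^ 2 = u ^ 4 / 12 := by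
  have : ∀ x : ℝ, (u - x) * x ^ 2 = u * x ^ 2 - x ^ 3 := fun x => by ring
  simp_rw [this]
  rw [intervalIntegral.integral_sub (Continuous.intervalIntegrable (by fun_prop) _ _)
    (Continuous.intervalIntegrable (by fun_prop) _ _), intervalIntegral.integral_const_mul,
    integral_pow, integral_pow]
  norm_num
  ring

lemma sub_conv {F : ℝ → ℝ} (hF : Continuous F) {u : ℝ} (hu : 0 < u) (t : ℝ) :
    F t - conv F (chiPow u 2) t =
      -(∫ x in (0:ℝ)..u, (u - x) * (F (t + x) - 2 * F t + F (t - x))) / u ^ 2 := by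
  have e : ∫ x in (0:ℝ)..u, (u - x) * (F (t + x) - 2 * F t + F (t - x)) =
      (∫ x in (0:ℝ)..u, (u - x) * (F (t + x) + F (t - x))) - u ^ 2 * F t := by
    have : ∀ x, (u - x) * (F (t + x) - 2 * F t + F (t - x)) =
      (u - x) * (F (t + x) + F (t - x)) - (u - x) * (2 * F t) := fun x => by ring
    simp_rw [this]
    rw [intervalIntegral.integral_sub (Continuous.intervalIntegrable (by fun_prop) _ _)
      (Continuous.intervalIntegrable (by fun_prop) _ _), intervalIntegral.integral_mul_const,
      integral_sub_id]
    ring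
  rw [e, conv_chiPow_two hu hF]
  field_simp
  ring

/-- A bound `C w(x)` for `|k(x)|` gives the bound `C ∫ (u - x) w(x)` for a weighted integral. -/
lemma abs_integral_le {k w : ℝ → ℝ} (hw : Continuous w) {u : ℝ} (hu : 0 < u)
    {C : ℝ} (hb : ∀ x ∈ Set.Ioc 0 u, |k x| ≤ C * w x) :
    |∫ x in (0:ℝ)..u, (u - x) * k x| ≤ C * ∫ x in (0:ℝ)..u, (u - x) * w x := by
  rw [← intervalIntegral.integral_const_mul, ← Real.norm_eq_abs]
  apply intervalIntegral.norm_integral_le_of_norm_le hu.le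
  · refine Filter.Eventually.of_forall fun x hx => ?_
    rw [Real.norm_eq_abs, abs_mul, abs_of_nonneg (by linarith [hx.2] : 0 ≤ u - x)]
    calc (u - x) * |k x| ≤ (u - x) * (C * w x) :=
          mul_le_mul_of_nonneg_left (hb x hx) (by linarith [hx.2])
      _ = _ := by ring
  · exact Continuous.intervalIntegrable (by fun_prop) _ _

lemma abs_conv_le {F : ℝ → ℝ} (hF : Continuous F) {M : ℝ} (hM : ∀ x, |F x| ≤ M) {u : ℝ}
    (hu : 0 < u) (t : ℝ) : |conv F (chiPow u 2) t| ≤ M := by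
  have h1 : |∫ x in (0:ℝ)..u, (u - x) * (F (t + x) + F (t - x))| ≤
      2 * M * ∫ x in (0:ℝ)..u, (u - x) * 1 :=
    abs_integral_le continuous_const hu fun x _ => by
      have := abs_add_le (F (t + x)) (F (t - x))
      linarith [hM (t + x), hM (t - x)]
  simp only [mul_one, integral_sub_id] at h1
  rw [conv_chiPow_two hu hF, abs_div, abs_of_pos (by positivity : 0 < u ^ 2),
    div_le_iff₀ (by positivity)]
  linarith

lemma conv_periodic {f : ℝ → ℝ} (hper : Function.Periodic f 1) (hf : Continuous f) {u : ℝ}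
    (hu : 0 < u) : Function.Periodic (conv f (chiPow u 2)) 1 := by
  intro t
  have e1 : ∀ x, f (t + 1 + x) = f (t + x) := fun x => by rw [← hper (t + x)]; congr 1; ring
  have e2 : ∀ x, f (t + 1 - x) = f (t - x) := fun x => by rw [← hper (t - x)]; congr 1; ring
  rw [conv_chiPow_two hu hf, conv_chiPow_two hu hf]
  simp_rw [e1, e2]

/-! ### Uniform norms and the modulus `W₂*` -/

lemma exists_abs_le {f : ℝ → ℝ} (hf : Continuous f) (hper : Function.Periodic f 1) :
    ∃ M, ∀ x, |f x| ≤ M := by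
  obtain ⟨M, hM⟩ := (hper.isBounded_of_continuous one_ne_zero hf).exists_norm_le
  exact ⟨M, fun x => hM _ ⟨x, rfl⟩⟩

lemma abs_le_unorm {f : ℝ → ℝ} {M : ℝ} (hM : ∀ x, |f x| ≤ M) (x : ℝ) : |f x| ≤ unorm f :=
  le_ciSup (f := fun u => |f u|) ⟨M, by rintro _ ⟨y, rfl⟩; exact hM y⟩ x

lemma unorm_le {f : ℝ → ℝ} {M : ℝ} (hM : ∀ x, |f x| ≤ M) : unorm f ≤ M := ciSup_le hM

lemma unorm_nonneg (f : ℝ → ℝ) : 0 ≤ unorm f := Real.iSup_nonneg fun _ => abs_nonneg _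

/-- The supremum defining `W₂*` is finite, so it dominates every `|f - f * χ_u²|`. -/
lemma abs_sub_conv_le_W2star {f : ℝ → ℝ} (hf : Continuous f) (hper : Function.Periodic f 1)
    {h u : ℝ} (hu : 0 < u) (huh : u ≤ h) (t : ℝ) :
    |f t - conv f (chiPow u 2) t| ≤ W2star f h 2 := by
  obtain ⟨M, hM⟩ := exists_abs_le hf hper
  have hb : ∀ v, 0 < v → ∀ t, |f t - conv f (chiPow v 2) t| ≤ M + M := fun v hv t =>
    (abs_sub _ _).trans (add_le_add (hM t) (abs_conv_le hf hM hv t))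
  refine (abs_le_unorm (hb u hu) t).trans ?_
  refine le_ciSup (f := fun u : Set.Ioc (0:ℝ) h => W2 f u.1 2) ⟨M + M, ?_⟩ ⟨u, hu, huh⟩
  rintro _ ⟨v, rfl⟩
  exact unorm_le (hb v.1 v.2.1)

/-! ### The lower bound for `W₂*` -/

lemma contDiff_two_of_hasDerivAt {g g1 g2 : ℝ → ℝ} (h1 : ∀ x, HasDerivAt g (g1 x) x)
    (h2 : ∀ x, HasDerivAt g1 (g2 x) x) (hc : Continuous g2) :
    ContDiff ℝ 2 g ∧ iteratedDeriv 2 g = g2 := by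
  have d1 : deriv g = g1 := funext fun x => (h1 x).deriv
  have d2 : deriv g1 = g2 := funext fun x => (h2 x).deriv
  constructor
  · rw [show (2 : WithTop ℕ∞) = 1 + 1 by norm_num, contDiff_succ_iff_deriv]
    refine ⟨fun x => (h1 x).differentiableAt, by simp, ?_⟩
    rw [d1, contDiff_one_iff_deriv, d2]
    exact ⟨fun x => (h2 x).differentiableAt, hc⟩
  · rw [iteratedDeriv_succ, iteratedDeriv_one, d1, d2]

/-- The competitor `g` in the K-functional: the mean of `f * χ_x²` against the
probability density `12 h⁻⁴ (h - x) x²` on `[0, h]`. -/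
lemma exists_smooth_approx {f : ℝ → ℝ} (hf : Continuous f) (hper : Function.Periodic f 1)
    {h : ℝ} (hh : 0 < h) : ∃ g : ℝ → ℝ, ContDiff ℝ 2 g ∧ Function.Periodic g 1 ∧
      (∀ t, |f t - g t| ≤ W2star f h 2) ∧
      ∀ t, iteratedDeriv 2 g t = 12 / h ^ 2 * (conv f (chiPow h 2) t - f t) := by
  obtain ⟨F1, F2, hF1, hF2, cF2⟩ := exists_second_antideriv hf
  obtain ⟨F3, F4, hF3, hF4, -⟩ := exists_second_antideriv cF2
  set g : ℝ → ℝ := fun t => 12 / h ^ 2 * ((F4 (t + h) - 2 * F4 t + F4 (t - h)) / h ^ 2 - F2 t)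
    with hg
  have hgmean : ∀ t, g t = 12 / h ^ 4 *
      ∫ x in (0:ℝ)..h, (h - x) * (F2 (t + x) - 2 * F2 t + F2 (t - x)) := by
    intro t
    have e := sub_conv cF2 hh t
    have e' := sq_mul_conv cF2 hF3 hF4 hh t
    simp only [hg]
    rw [← e']
    have : (∫ x in (0:ℝ)..h, (h - x) * (F2 (t + x) - 2 * F2 t + F2 (t - x))) =
        h ^ 2 * (conv F2 (chiPow h 2) t - F2 t) := by
      rw [eq_div_iff (by positivity)] at e
      linarith
    rw [this]
    field_simp
  have hconv : ∀ x, 0 < x → ∀ t, F2 (t + x) - 2 * F2 t + F2 (t - x) =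
      x ^ 2 * conv f (chiPow x 2) t := fun x hx t => (sq_mul_conv hf hF1 hF2 hx t).symm
  obtain ⟨hsm, hd2⟩ : ContDiff ℝ 2 g ∧ iteratedDeriv 2 g =
      fun t => 12 / h ^ 2 * ((F2 (t + h) - 2 * F2 t + F2 (t - h)) / h ^ 2 - f t) := by
    have key : ∀ {A B C D : ℝ → ℝ}, (∀ x, HasDerivAt A (B x) x) → (∀ x, HasDerivAt C (D x) x) →
        ∀ t, HasDerivAt (fun t => 12 / h ^ 2 * ((A (t + h) - 2 * A t + A (t - h)) / h ^ 2 - C t))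
          (12 / h ^ 2 * ((B (t + h) - 2 * B t + B (t - h)) / h ^ 2 - D t)) t := by
      intro A B C D hA hC t
      exact ((((((hA (t + h)).comp_add_const t h).sub ((hA t).const_mul 2)).add
        ((hA (t - h)).comp_sub_const t h)).div_const _).sub (hC t)).const_mul _
    exact contDiff_two_of_hasDerivAt (key hF4 hF2) (key hF3 hF1) (by fun_prop)
  refine ⟨g, hsm, fun t => ?_, fun t => ?_, fun t => ?_⟩
  · rw [hgmean, hgmean]
    congr 1
    apply intervalIntegral.integral_congr_ae
    refine Filter.Eventually.of_forall fun x hx => ?_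
    rw [Set.uIoc_of_le hh.le] at hx
    rw [hconv x hx.1, hconv x hx.1, conv_periodic hper hf hx.1]
  · have e : f t - g t = 12 / h ^ 4 *
        ∫ x in (0:ℝ)..h, (h - x) * (x ^ 2 * f t - (F2 (t + x) - 2 * F2 t + F2 (t - x))) := by
      simp_rw [mul_sub (_ - _) (_ * f t), ← mul_assoc _ _ (f t)]
      rw [intervalIntegral.integral_sub (Continuous.intervalIntegrable (by fun_prop) _ _)
        (Continuous.intervalIntegrable (by fun_prop) _ _), intervalIntegral.integral_mul_const,
        integral_sub_mul_sq, hgmean]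
      field_simp
    have hb := abs_integral_le (u := h) (w := fun x => x ^ 2) (C := W2star f h 2)
      (k := fun x => x ^ 2 * f t - (F2 (t + x) - 2 * F2 t + F2 (t - x))) (by fun_prop) hh
      (fun x hx => by
        rw [hconv x hx.1, ← mul_sub, abs_mul, abs_of_nonneg (sq_nonneg x), mul_comm]
        exact mul_le_mul_of_nonneg_right (abs_sub_conv_le_W2star hf hper hx.1 hx.2 t)
          (sq_nonneg x))
    rw [integral_sub_mul_sq] at hb
    rw [e, abs_mul, abs_of_pos (by positivity : 0 < 12 / h ^ 4)]
    calc _ ≤ 12 / h ^ 4 * (W2star f h 2 * (h ^ 4 / 12)) := by gcongr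
      _ = _ := by field_simp
  · rw [hd2]
    beta_reduce
    rw [hconv h hh]
    field_simp

/-! ### The upper bound for `W₂*` -/

lemma abs_sub_conv_le {g : ℝ → ℝ} (hg : ContDiff ℝ 2 g) {M : ℝ}
    (hM : ∀ x, |iteratedDeriv 2 g x| ≤ M) {u : ℝ} (hu : 0 < u) (t : ℝ) :
    |g t - conv g (chiPow u 2) t| ≤ u ^ 2 / 12 * M := by
  have hc2 : Continuous (iteratedDeriv 2 g) := hg.continuous_iteratedDeriv 2 le_rfl
  have h1 : ∀ x, HasDerivAt g (deriv g x) x := fun x =>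
    (hg.differentiable (by norm_num) x).hasDerivAt
  have h2 : ∀ x, HasDerivAt (deriv g) (iteratedDeriv 2 g x) x := by
    intro x
    rw [iteratedDeriv_succ, iteratedDeriv_one]
    have := hg.differentiable_iteratedDeriv 1 (by norm_num)
    rw [iteratedDeriv_one] at this
    exact (this x).hasDerivAt
  have hb := abs_integral_le (u := u) (w := fun x => x ^ 2) (C := M)
    (k := fun x => g (t + x) - 2 * g t + g (t - x)) (by fun_prop) hu
    (fun x hx => by
      rw [← sq_mul_conv hc2 h2 h1 hx.1, abs_mul, abs_of_nonneg (sq_nonneg x), mul_comm]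
      exact mul_le_mul_of_nonneg_right (abs_conv_le hc2 hM hx.1 t) (sq_nonneg x))
  rw [integral_sub_mul_sq] at hb
  rw [sub_conv hg.continuous hu, abs_div, abs_neg, abs_of_pos (by positivity : 0 < u ^ 2),
    div_le_iff₀ (by positivity)]
  calc _ ≤ _ := hb
    _ = _ := by ring

lemma conv_sub {f g : ℝ → ℝ} (hf : Continuous f) (hg : Continuous g) {u : ℝ} (hu : 0 < u)
    (t : ℝ) : conv (fun t => f t - g t) (chiPow u 2) t =
      conv f (chiPow u 2) t - conv g (chiPow u 2) t := by
  rw [conv_chiPow_two hu hf, conv_chiPow_two hu hg, conv_chiPow_two hu (by fun_prop), ← sub_div,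
    ← intervalIntegral.integral_sub (Continuous.intervalIntegrable (by fun_prop) _ _)
        (Continuous.intervalIntegrable (by fun_prop) _ _)]
  congr 2
  ext x
  ring

/-! ### The two-sided estimate -/

/-- Theorem 1, first part: `(2/3)·K₂(f, h/(2√6)) ≤ W₂*(f, χ_h²) ≤ 2·K₂(f, h/(2√6))`. -/
theorem stmt0 (f : ℝ → ℝ) (hf : Continuous f) (hper : Function.Periodic f 1)
    (h : ℝ) (hh : 0 < h) :
    (2/3) * K2 f (h / (2 * Real.sqrt 6)) ≤ W2star f h 2 ∧
    W2star f h 2 ≤ 2 * K2 f (h / (2 * Real.sqrt 6)) := by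
  have hsq : (h / (2 * Real.sqrt 6)) ^ 2 = h ^ 2 / 24 := by
    rw [div_pow, mul_pow, Real.sq_sqrt (by norm_num)]
    norm_num
  unfold K2
  rw [hsq]
  constructor
  · obtain ⟨g, hg, hgper, hfg, hg2⟩ := exists_smooth_approx hf hper hh
    have hle : (⨅ g : {g : ℝ → ℝ // ContDiff ℝ 2 g ∧ Function.Periodic g 1},
        (unorm (fun t => f t - g.1 t) + h ^ 2 / 24 * unorm (iteratedDeriv 2 g.1))) ≤
        unorm (fun t => f t - g t) + h ^ 2 / 24 * unorm (iteratedDeriv 2 g) := by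
      refine ciInf_le (f := fun g : {g : ℝ → ℝ // ContDiff ℝ 2 g ∧ Function.Periodic g 1} =>
        unorm (fun t => f t - g.1 t) + h ^ 2 / 24 * unorm (iteratedDeriv 2 g.1))
        ⟨0, ?_⟩ ⟨g, hg, hgper⟩
      rintro _ ⟨k, rfl⟩
      have := unorm_nonneg (fun t => f t - k.1 t)
      have := unorm_nonneg (iteratedDeriv 2 k.1)
      positivity
    have h1 : unorm (fun t => f t - g t) ≤ W2star f h 2 := unorm_le hfg
    have h2 : unorm (iteratedDeriv 2 g) ≤ 12 / h ^ 2 * W2star f h 2 := unorm_le fun t => by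
      rw [hg2, abs_mul, abs_of_pos (by positivity : 0 < 12 / h ^ 2), abs_sub_comm]
      exact mul_le_mul_of_nonneg_left (abs_sub_conv_le_W2star hf hper hh le_rfl t) (by positivity)
    have h3 : h ^ 2 / 24 * unorm (iteratedDeriv 2 g) ≤ W2star f h 2 / 2 := by
      calc _ ≤ h ^ 2 / 24 * (12 / h ^ 2 * W2star f h 2) := by gcongr
        _ = _ := by field_simp; ring
    linarith
  · rw [← div_le_iff₀' (by norm_num)]
    have : Nonempty {g : ℝ → ℝ // ContDiff ℝ 2 g ∧ Function.Periodic g 1} :=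
      ⟨⟨fun _ => 0, contDiff_const, fun _ => rfl⟩⟩
    refine le_ciInf fun ⟨g, hg, hgper⟩ => ?_
    have : Nonempty (Set.Ioc (0:ℝ) h) := ⟨⟨h, hh, le_rfl⟩⟩
    rw [div_le_iff₀' (by norm_num)]
    refine ciSup_le fun ⟨u, hu, huh⟩ => unorm_le fun t => ?_
    have hcg := hg.continuous
    have hce : Continuous fun t => f t - g t := hf.sub hcg
    obtain ⟨M, hM⟩ := exists_abs_le hce (hper.sub hgper)
    have hE := abs_le_unorm hM
    -- The second derivative of `g` is bounded because it is continuous and periodic.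
    have hper2 : Function.Periodic (iteratedDeriv 2 g) 1 := fun t => by
      rw [← congrFun (iteratedDeriv_comp_add_const 2 g 1) t,
        show (fun z => g (z + 1)) = g from funext hgper]
    obtain ⟨N, hN⟩ := exists_abs_le (hg.continuous_iteratedDeriv 2 le_rfl) hper2
    have b1 := abs_sub_conv_le hg (abs_le_unorm hN) hu t
    have b2 := abs_conv_le hce hE hu t
    have b3 := hE t
    rw [conv_sub hf hcg hu] at b2
    have b4 : u ^ 2 / 12 * unorm (iteratedDeriv 2 g) ≤ h ^ 2 / 12 * unorm (iteratedDeriv 2 g) := by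
      have := unorm_nonneg (iteratedDeriv 2 g)
      gcongr
    rw [abs_le] at b1 b2 b3 ⊢
    constructor <;> linarith
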